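/- Let (M, 0) be a pointed metric space, 1 < p < ∞ with conjugate exponent q, b > 0, and let (f_n)_{n∈ℕ} be a sequence of Lipschitz functions f_n : M → 𝕂 with f_n(0) = 0 for all n. Then (f_n) is a metric p-Bessel sequence for M with bound b if and only if for every (a_n)_n ∈ ℓ^q(ℕ) the series ∑_{n=1}^∞ a_n (f_n(x) − f_n(y)) converges for all x, y ∈ M, and the function F(x,y) := ∑_{n=1}^∞ a_n (f_n(x) − f_n(y)) satisfies |F(x,y) − F(u,v)| ≤ b·‖(a_n)‖_q·(d(x,u) + d(y,v)) for all x, y, u, v ∈ M. -/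

import Mathlib

/-!
Write `F(x,y) = ∑ a_n (f_n x - f_n y)`. For fixed `x` and `y`, the duality of `ℓ^p` and `ℓ^q`
identifies the `ℓ^p` norm of `(f_n x - f_n y)` with the norm of the functional `a ↦ F(x,y)` on
`ℓ^q`, so the Bessel bound says that `|F(x,y)| ≤ b ‖a‖_q d(x,y)` for every `a ∈ ℓ^q`. Since
`F(x,y) + F(y,z) = F(x,z)`, one has `F(x,y) - F(u,v) = F(x,u) - F(y,v)`, which makes this bound on
`F` equivalent to the Lipschitz estimate.
-/

open Finset

section Duality

variable {ι : Type*} {p q : ℝ}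

theorem summable_rpow_and_Lp_tsum_le_iff (hp : 0 < p) {C : ℝ} (hC : 0 ≤ C) {g : ι → ℝ}
    (hg : ∀ i, 0 ≤ g i) :
    ((Summable fun i => g i ^ p) ∧ (∑' i, g i ^ p) ^ (1 / p) ≤ C) ↔
      ∀ s : Finset ι, (∑ i ∈ s, g i ^ p) ^ (1 / p) ≤ C := by
  have hgp : ∀ i, 0 ≤ g i ^ p := fun i => Real.rpow_nonneg (hg i) p
  simp only [one_div, Real.rpow_inv_le_iff_of_pos (tsum_nonneg hgp) hC hp,
    Real.rpow_inv_le_iff_of_pos (sum_nonneg fun i _ => hgp i) hC hp]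
  exact ⟨fun ⟨hsum, hle⟩ s => (hsum.sum_le_tsum s fun i _ => hgp i).trans hle,
    fun h => ⟨summable_of_sum_le hgp h, Real.tsum_le_of_sum_le hgp h⟩⟩

theorem summable_norm_mul_and_tsum_norm_mul_le_Lp_mul_Lq {R : Type*} [NonUnitalSeminormedRing R]
    (hpq : p.HolderConjugate q) {a c : ι → R} (ha : Summable fun i => ‖a i‖ ^ p)
    (hc : Summable fun i => ‖c i‖ ^ q) :
    (Summable fun i => ‖a i * c i‖) ∧
      ∑' i, ‖a i * c i‖ ≤ (∑' i, ‖a i‖ ^ p) ^ (1 / p) * (∑' i, ‖c i‖ ^ q) ^ (1 / q) := by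
  obtain ⟨hsum, hle⟩ := Real.summable_and_inner_le_Lp_mul_Lq_tsum_of_nonneg hpq
    (fun i => norm_nonneg (a i)) (fun i => norm_nonneg (c i)) ha hc
  have hmul : Summable fun i => ‖a i * c i‖ :=
    hsum.of_nonneg_of_le (fun _ => norm_nonneg _) fun _ => norm_mul_le _ _
  exact ⟨hmul, (hmul.tsum_le_tsum (fun _ => norm_mul_le _ _) hsum).trans hle⟩

variable {𝕂 : Type*} [RCLike 𝕂]

theorem exists_sum_mul_eq_Lp_of_holderConjugate (hpq : p.HolderConjugate q) (s : Finset ι)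
    (c : ι → 𝕂) :
    ∃ a : ι → 𝕂, (∀ i ∉ s, a i = 0) ∧ ∑ i ∈ s, ‖a i‖ ^ q ≤ 1 ∧
      ∑ i ∈ s, a i * c i = (((∑ i ∈ s, ‖c i‖ ^ p) ^ (1 / p) : ℝ) : 𝕂) := by
  classical
  obtain ⟨g, hgq, hgc⟩ := (NNReal.isGreatest_Lp s (fun i => ‖c i‖₊) hpq).1
  choose w hw hwc using fun i => RCLike.exists_norm_eq_mul_self (c i)
  let a : ι → 𝕂 := fun i => if i ∈ s then (g i : ℝ) * w i else 0
  have ha : ∀ i ∈ s, a i = (g i : ℝ) * w i := fun i hi => if_pos hi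
  refine ⟨a, fun i hi => if_neg hi, ?_, ?_⟩
  · have ha_norm : ∀ i ∈ s, ‖a i‖ ^ q = (g i : ℝ) ^ q := fun i hi => by simp [ha i hi, hw]
    rw [sum_congr rfl ha_norm]
    exact_mod_cast hgq
  · have hgc' : ∑ i ∈ s, ‖c i‖ * g i = (∑ i ∈ s, ‖c i‖ ^ p) ^ (1 / p) := by
      simpa using congrArg NNReal.toReal hgc
    rw [← hgc', RCLike.ofReal_sum]
    refine sum_congr rfl fun i hi => ?_
    rw [ha i hi, RCLike.ofReal_mul, hwc]
    ring

theorem summable_rpow_and_Lp_tsum_le_iff_forall_mul (hpq : p.HolderConjugate q) {C : ℝ}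
    (hC : 0 ≤ C) (c : ι → 𝕂) :
    ((Summable fun i => ‖c i‖ ^ p) ∧ (∑' i, ‖c i‖ ^ p) ^ (1 / p) ≤ C) ↔
      ∀ a : ι → 𝕂, (Summable fun i => ‖a i‖ ^ q) →
        (Summable fun i => a i * c i) ∧
          ‖∑' i, a i * c i‖ ≤ C * (∑' i, ‖a i‖ ^ q) ^ (1 / q) := by
  constructor
  · rintro ⟨hc, hle⟩ a ha
    obtain ⟨hsum, holder⟩ := summable_norm_mul_and_tsum_norm_mul_le_Lp_mul_Lq hpq.symm ha hc
    refine ⟨hsum.of_norm, ?_⟩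
    calc ‖∑' i, a i * c i‖ ≤ ∑' i, ‖a i * c i‖ := norm_tsum_le_tsum_norm hsum
      _ ≤ (∑' i, ‖a i‖ ^ q) ^ (1 / q) * (∑' i, ‖c i‖ ^ p) ^ (1 / p) := holder
      _ ≤ (∑' i, ‖a i‖ ^ q) ^ (1 / q) * C := by gcongr
      _ = C * (∑' i, ‖a i‖ ^ q) ^ (1 / q) := mul_comm _ _
  · intro h
    rw [summable_rpow_and_Lp_tsum_le_iff hpq.pos hC fun i => norm_nonneg (c i)]
    intro s
    obtain ⟨a, hzero, hq, heq⟩ := exists_sum_mul_eq_Lp_of_holderConjugate hpq s c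
    have hzero_rpow : ∀ i ∉ s, ‖a i‖ ^ q = 0 := fun i hi => by
      rw [hzero i hi, norm_zero, Real.zero_rpow hpq.symm.ne_zero]
    calc (∑ i ∈ s, ‖c i‖ ^ p) ^ (1 / p) = ‖∑' i, a i * c i‖ := by
          rw [tsum_eq_sum fun i hi => by rw [hzero i hi, zero_mul], heq,
            RCLike.norm_of_nonneg (by positivity)]
      _ ≤ C * (∑' i, ‖a i‖ ^ q) ^ (1 / q) := (h a (summable_of_ne_finset_zero hzero_rpow)).2
      _ = C * (∑ i ∈ s, ‖a i‖ ^ q) ^ (1 / q) := by rw [tsum_eq_sum hzero_rpow]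
      _ ≤ C * 1 := by
          gcongr
          exact Real.rpow_le_one (by positivity) hq hpq.symm.one_div_nonneg
      _ = C := mul_one C

end Duality

theorem norm_sub_le_mul_dist_add_dist_iff_of_add_eq {M E : Type*} [PseudoMetricSpace M]
    [SeminormedAddCommGroup E] {F : M → M → E} (hF : ∀ x y z, F x y + F y z = F x z) {K : ℝ} :
    (∀ x y u v, ‖F x y - F u v‖ ≤ K * (dist x u + dist y v)) ↔
      ∀ x y, ‖F x y‖ ≤ K * dist x y := by
  constructor
  · intro h x y
    have hyy : F y y = 0 := left_eq_add.mp (hF y y y).symm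
    simpa [hyy] using h x y y y
  · intro h x y u v
    have hswap : F x y - F u v = F x u - F y v := by
      rw [← hF x u y, ← hF u y v]
      abel
    calc ‖F x y - F u v‖ ≤ ‖F x u‖ + ‖F y v‖ := hswap ▸ norm_sub_le _ _
      _ ≤ K * dist x u + K * dist y v := add_le_add (h x u) (h y v)
      _ = K * (dist x u + dist y v) := (mul_add _ _ _).symm

theorem tsum_mul_sub_add_tsum_mul_sub {ι M R : Type*} [NonUnitalNonAssocRing R]
    [TopologicalSpace R] [ContinuousAdd R] [T2Space R] {a : ι → R} {f : ι → M → R}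
    (h : ∀ x y, Summable fun i => a i * (f i x - f i y)) (x y z : M) :
    ∑' i, a i * (f i x - f i y) + ∑' i, a i * (f i y - f i z) =
      ∑' i, a i * (f i x - f i z) := by
  rw [← (h x y).tsum_add (h y z)]
  simp only [← mul_add, sub_add_sub_cancel]

section MetricBessel

variable {ι M 𝕂 : Type*} [PseudoMetricSpace M] [RCLike 𝕂]

/-- The notion of a metric `p`-Bessel sequence for `M` with bound `b`, for families over an
arbitrary index type. Lipschitz continuity of each `f i` is not a separate clause, since for
`0 < p` the norm of `f i x - f i y` is at most the `ℓ^p` norm of the family of differences; the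
summability clause excludes the junk value `0` of a divergent sum. -/
def IsMetricBessel (p b : ℝ) (f : ι → M → 𝕂) : Prop :=
  (∀ x y : M, Summable fun i => ‖f i x - f i y‖ ^ p) ∧
    ∀ x y : M, (∑' i, ‖f i x - f i y‖ ^ p) ^ (1 / p) ≤ b * dist x y

theorem metric_pBessel_iff_multiplier_lipschitz_general {p q : ℝ} (hpq : p.HolderConjugate q)
    {b : ℝ} (hb : 0 ≤ b) (f : ι → M → 𝕂) :
    IsMetricBessel p b f ↔
      ∀ a : ι → 𝕂, Summable (fun i => ‖a i‖ ^ q) →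
        (∀ x y : M, Summable fun i => a i * (f i x - f i y)) ∧
        ∀ x y u v : M,
          ‖(∑' i, a i * (f i x - f i y)) - ∑' i, a i * (f i u - f i v)‖ ≤
            b * (∑' i, ‖a i‖ ^ q) ^ (1 / q) * (dist x u + dist y v) := by
  calc IsMetricBessel p b f
    _ ↔ ∀ x y, (Summable fun i => ‖f i x - f i y‖ ^ p) ∧
          (∑' i, ‖f i x - f i y‖ ^ p) ^ (1 / p) ≤ b * dist x y := by
      simp only [IsMetricBessel, forall_and]
    _ ↔ ∀ x y, ∀ a : ι → 𝕂, Summable (fun i => ‖a i‖ ^ q) →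
          (Summable fun i => a i * (f i x - f i y)) ∧
          ‖∑' i, a i * (f i x - f i y)‖ ≤ b * dist x y * (∑' i, ‖a i‖ ^ q) ^ (1 / q) :=
      forall₂_congr fun x y =>
        summable_rpow_and_Lp_tsum_le_iff_forall_mul hpq (by positivity) fun i => f i x - f i y
    _ ↔ ∀ a : ι → 𝕂, Summable (fun i => ‖a i‖ ^ q) →
          (∀ x y, Summable fun i => a i * (f i x - f i y)) ∧
          ∀ x y, ‖∑' i, a i * (f i x - f i y)‖ ≤ b * (∑' i, ‖a i‖ ^ q) ^ (1 / q) * dist x y := by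
      simp only [mul_right_comm b, ← forall_and]
      exact ⟨fun h a ha x y => h x y a ha, fun h x y a ha => h a ha x y⟩
    _ ↔ _ := forall₂_congr fun a _ => and_congr_right fun h =>
      (norm_sub_le_mul_dist_add_dist_iff_of_add_eq (tsum_mul_sub_add_tsum_mul_sub h)).symm

end MetricBessel

/-- Characterization of metric p-Bessel sequences on a pointed metric space `(M, base)`:
`(f_n)` (Lipschitz, vanishing at the base point) is a metric p-Bessel sequence with bound `b`
iff for every `(a_n) ∈ ℓ^q` the series `∑ a_n (f_n x - f_n y)` converges for all `x, y` and the
resulting function `F(x,y)` satisfies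
`|F(x,y) - F(u,v)| ≤ b ‖(a_n)‖_q (d(x,u) + d(y,v))`. -/
theorem metric_pBessel_iff_multiplier_lipschitz
    {𝕂 : Type*} [RCLike 𝕂] {M : Type*} [MetricSpace M] (base : M)
    (p q : ℝ) (hp : 1 < p) (hpq : 1 / p + 1 / q = 1)
    (b : ℝ) (hb : 0 < b)
    (f : ℕ → M → 𝕂) (hlip : ∀ n, ∃ K, LipschitzWith K (f n))
    (hf0 : ∀ n, f n base = 0) :
    ((∀ x y : M, Summable fun n => ‖f n x - f n y‖ ^ p) ∧
      ∀ x y : M, (∑' n, ‖f n x - f n y‖ ^ p) ^ (1 / p) ≤ b * dist x y) ↔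
    (∀ a : ℕ → 𝕂, Summable (fun n => ‖a n‖ ^ q) →
      (∀ x y : M, Summable fun n => a n * (f n x - f n y)) ∧
      ∀ x y u v : M,
        ‖(∑' n, a n * (f n x - f n y)) - ∑' n, a n * (f n u - f n v)‖ ≤
          b * (∑' n, ‖a n‖ ^ q) ^ (1 / q) * (dist x u + dist y v)) := by
  have hpq' : p.HolderConjugate q := Real.holderConjugate_iff.mpr ⟨hp, by simpa using hpq⟩
  exact metric_pBessel_iff_multiplier_lipschitz_general hpq' hb.le f
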